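/- arXiv:1402.6198 — 2 statements merged into one kernel-verified Lean document; each statement's English description precedes it below -/
import Mathlib

section
/- Let 0 < s0 ≤ 1/2 and f ∈ H^{s0}(T). There is an absolute constant C such that for all k1, k2, k3 ∈ ℤ: |E(k1,k2,k3)| ≤ C ‖f‖_{H^{s0}}² ⟨k_max⟩^{1−2s0}, where k_max = max(|k1|,|k2|,|k3|). -/
/-!
Each mode satisfies `|k| ‖f k‖² ≤ ⟨k⟩^{1-2s} · ⟨k⟩^{2s} ‖f k‖² ≤ ⟨k⟩^{1-2s} ‖f‖_{H^s}²`, since a single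
term of the series defining the norm is bounded by its sum. All four frequencies occurring in `E`
satisfy `|k| ≤ 3 k_max`, hence `⟨k⟩ ≤ 3 ⟨k_max⟩`, and `0 ≤ 1 - 2s ≤ 1` turns this into
`⟨k⟩^{1-2s} ≤ 3 ⟨k_max⟩^{1-2s}`. Adding the four modes gives the constant `4 · 3 = 12`.
-/

open MeasureTheory Complex
open scoped FourierTransform Classical BigOperators

/-- Japanese bracket `⟨x⟩ = (1+x²)^{1/2}`. -/
noncomputable def jp (x : ℝ) : ℝ := (1 + x ^ 2) ^ ((1:ℝ)/2)

/-- The `H^s(T)` norm of a sequence of Fourier coefficients. -/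
noncomputable def HNorm (s : ℝ) (f : ℤ → ℂ) : ℝ :=
  (∑' k : ℤ, jp k ^ (2 * s) * ‖f k‖ ^ 2) ^ ((1:ℝ)/2)

/-- Membership in `H^s(T)`, via Fourier coefficients. -/
def MemH (s : ℝ) (f : ℤ → ℂ) : Prop :=
  Summable (fun k : ℤ => jp k ^ (2 * s) * ‖f k‖ ^ 2)

/-- The modified dispersion relation `φ(k) = k³ + k|f̂(k)|²`. -/
noncomputable def phi (f : ℤ → ℂ) (k : ℤ) : ℝ := (k:ℝ)^3 + (k:ℝ) * ‖f k‖^2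

/-- The weight-integrand of the modified Bourgain `Y^{s,b}` norm:
`⟨τ − k³ − k|f̂(k)|²⟩^{2b} ⟨k⟩^{2s} |z̃(τ,k)|²`, where `z̃(·,k)` is the Fourier
transform in time of `ẑ_k(t) = z t k`. -/
noncomputable def Ywt (f : ℤ → ℂ) (s b : ℝ) (z : ℝ → ℤ → ℂ) (k : ℤ) (τ : ℝ) : ℝ :=
  jp (τ - phi f k) ^ (2*b) * jp k ^ (2*s) * ‖𝓕 (fun t : ℝ => z t k) τ‖^2

/-- The modified Bourgain norm `‖z‖_{Y^{s,b}}`. -/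
noncomputable def YNorm (f : ℤ → ℂ) (s b : ℝ) (z : ℝ → ℤ → ℂ) : ℝ :=
  (∑' k : ℤ, ∫ τ : ℝ, Ywt f s b z k τ) ^ ((1:ℝ)/2)

/-- Membership in the modified Bourgain space `Y^{s,b}`. -/
def MemY (f : ℤ → ℂ) (s b : ℝ) (z : ℝ → ℤ → ℂ) : Prop :=
  (∀ k : ℤ, Integrable (Ywt f s b z k)) ∧
    Summable (fun k : ℤ => ∫ τ : ℝ, Ywt f s b z k τ)

/-- The restricted norm `‖v‖_{Y^{s,b}_T} = inf {‖u‖_{Y^{s,b}} : u = v on (−T,T)}`. -/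
noncomputable def YNormT (f : ℤ → ℂ) (s b T : ℝ) (z : ℝ → ℤ → ℂ) : ℝ :=
  sInf {r : ℝ | ∃ u : ℝ → ℤ → ℂ,
    (∀ t ∈ Set.Ioo (-T) T, ∀ k : ℤ, u t k = z t k) ∧ r = YNorm f s b u}

/-- The `L^∞((0,T), H^s)` norm. -/
noncomputable def LinftyH (s T : ℝ) (z : ℝ → ℤ → ℂ) : ℝ :=
  ⨆ t ∈ Set.Ioo (0:ℝ) T, HNorm s (z t)

/-- The non-resonant trilinear operator `NR`. -/
noncomputable def NR (v1 v2 v3 : ℤ → ℂ) (k : ℤ) : ℂ :=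
  -(Complex.I * (k:ℂ) / 3) *
    ∑' p : ℤ × ℤ,
      if k ≠ 0 ∧ p.1 ≠ 0 ∧ p.2 ≠ 0 ∧ k - p.1 - p.2 ≠ 0 ∧
          (p.1 + p.2) * (p.2 + (k - p.1 - p.2)) * ((k - p.1 - p.2) + p.1) ≠ 0
      then v1 p.1 * v2 p.2 * v3 (k - p.1 - p.2) else 0

/-- `E(k1,k2,k3) = k1|f̂(k1)|² + k2|f̂(k2)|² + k3|f̂(k3)|² − k|f̂(k)|²`, `k = k1+k2+k3`. -/
noncomputable def Ecoef (f : ℤ → ℂ) (k1 k2 k3 : ℤ) : ℝ :=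
  (k1:ℝ) * ‖f k1‖^2 + (k2:ℝ) * ‖f k2‖^2 + (k3:ℝ) * ‖f k3‖^2
    - ((k1+k2+k3 : ℤ):ℝ) * ‖f (k1+k2+k3)‖^2

/-- `k_max = max(|k1|,|k2|,|k3|)` as a real number. -/
noncomputable def kmax (k1 k2 k3 : ℤ) : ℝ := max (max |(k1:ℝ)| |(k2:ℝ)|) |(k3:ℝ)|

lemma jp_eq_sqrt (x : ℝ) : jp x = √(1 + x ^ 2) := (Real.sqrt_eq_rpow _).symm

lemma jp_pos (x : ℝ) : 0 < jp x := by
  rw [jp_eq_sqrt]; positivity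

lemma abs_le_jp (x : ℝ) : |x| ≤ jp x := by
  rw [jp_eq_sqrt]
  exact Real.abs_le_sqrt (by linarith)

lemma jp_le_three_mul {x m : ℝ} (h : |x| ≤ 3 * m) : jp x ≤ 3 * jp m := by
  rw [jp_eq_sqrt, jp_eq_sqrt]
  refine Real.sqrt_le_iff.mpr ⟨by positivity, ?_⟩
  rw [mul_pow, Real.sq_sqrt (by positivity)]
  have := pow_le_pow_left₀ (abs_nonneg x) h 2
  rw [sq_abs] at this
  linarith

lemma hNorm_sq (s : ℝ) (f : ℤ → ℂ) :
    HNorm s f ^ 2 = ∑' k : ℤ, jp k ^ (2 * s) * ‖f k‖ ^ 2 := by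
  rw [HNorm, ← Real.sqrt_eq_rpow, Real.sq_sqrt]
  exact tsum_nonneg fun k => mul_nonneg (Real.rpow_nonneg (jp_pos _).le _) (sq_nonneg _)

/-- Bound for the contribution of a single mode at frequency at most `3 m`. -/
lemma abs_mode_le {s : ℝ} (hs0 : 0 < s) (hs : s ≤ 1 / 2) {f : ℤ → ℂ} (hf : MemH s f)
    {k : ℤ} {m : ℝ} (hk : |(k : ℝ)| ≤ 3 * m) :
    |(k : ℝ) * ‖f k‖ ^ 2| ≤ 3 * HNorm s f ^ 2 * jp m ^ (1 - 2 * s) := by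
  have hterm : jp k ^ (2 * s) * ‖f k‖ ^ 2 ≤ HNorm s f ^ 2 := by
    rw [hNorm_sq]
    exact hf.le_tsum k fun j _ =>
      mul_nonneg (Real.rpow_nonneg (jp_pos _).le _) (sq_nonneg _)
  have hweight : jp k ^ (1 - 2 * s) ≤ 3 * jp m ^ (1 - 2 * s) := by
    calc jp k ^ (1 - 2 * s) ≤ (3 * jp m) ^ (1 - 2 * s) :=
          Real.rpow_le_rpow (jp_pos _).le (jp_le_three_mul hk) (by linarith)
      _ = (3 : ℝ) ^ (1 - 2 * s) * jp m ^ (1 - 2 * s) :=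
          Real.mul_rpow (by norm_num) (jp_pos _).le
      _ ≤ 3 * jp m ^ (1 - 2 * s) := by
          refine mul_le_mul_of_nonneg_right ?_ (Real.rpow_nonneg (jp_pos _).le _)
          exact Real.rpow_le_self_of_one_le (by norm_num) (by linarith)
  have hsplit : jp k ^ (1 - 2 * s) * jp k ^ (2 * s) = jp k := by
    rw [← Real.rpow_add (jp_pos _), sub_add_cancel, Real.rpow_one]
  calc |(k : ℝ) * ‖f k‖ ^ 2| = |(k : ℝ)| * ‖f k‖ ^ 2 := by
        rw [abs_mul, abs_of_nonneg (sq_nonneg ‖f k‖)]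
    _ ≤ jp k * ‖f k‖ ^ 2 := mul_le_mul_of_nonneg_right (abs_le_jp _) (sq_nonneg _)
    _ = jp k ^ (1 - 2 * s) * (jp k ^ (2 * s) * ‖f k‖ ^ 2) := by rw [← mul_assoc, hsplit]
    _ ≤ (3 * jp m ^ (1 - 2 * s)) * HNorm s f ^ 2 := by
        have := Real.rpow_nonneg (jp_pos m).le (1 - 2 * s)
        have := Real.rpow_nonneg (jp_pos k).le (2 * s)
        exact mul_le_mul hweight hterm (by positivity) (by positivity)
    _ = 3 * HNorm s f ^ 2 * jp m ^ (1 - 2 * s) := by ring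

/-- `|E(k1,k2,k3)| ≤ C ‖f‖_{H^{s0}}² ⟨k_max⟩^{1−2s0}`. -/
theorem stmt9 :
    ∃ C : ℝ, 0 < C ∧
      ∀ s0 : ℝ, 0 < s0 → s0 ≤ 1/2 →
      ∀ f : ℤ → ℂ, MemH s0 f →
      ∀ k1 k2 k3 : ℤ,
        |Ecoef f k1 k2 k3| ≤ C * HNorm s0 f ^ 2 * jp (kmax k1 k2 k3) ^ (1 - 2*s0) := by
  refine ⟨12, by norm_num, fun s0 hs0 hs f hf k1 k2 k3 => ?_⟩
  have h1 : |(k1 : ℝ)| ≤ kmax k1 k2 k3 := (le_max_left _ _).trans (le_max_left _ _)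
  have h2 : |(k2 : ℝ)| ≤ kmax k1 k2 k3 := (le_max_right _ _).trans (le_max_left _ _)
  have h3 : |(k3 : ℝ)| ≤ kmax k1 k2 k3 := le_max_right _ _
  have h0 : 0 ≤ kmax k1 k2 k3 := (abs_nonneg _).trans h1
  have hk : |((k1 + k2 + k3 : ℤ) : ℝ)| ≤ 3 * kmax k1 k2 k3 := by
    push_cast
    linarith [abs_add_three (k1 : ℝ) k2 k3]
  have e1 := abs_le.mp (abs_mode_le hs0 hs hf (k := k1) (m := kmax k1 k2 k3) (by linarith))
  have e2 := abs_le.mp (abs_mode_le hs0 hs hf (k := k2) (m := kmax k1 k2 k3) (by linarith))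
  have e3 := abs_le.mp (abs_mode_le hs0 hs hf (k := k3) (m := kmax k1 k2 k3) (by linarith))
  have e := abs_le.mp (abs_mode_le hs0 hs hf hk)
  rw [Ecoef, abs_le]
  constructor <;> linarith [e1.1, e1.2, e2.1, e2.2, e3.1, e3.2, e.1, e.2]
end

section
/- Let k1, k2, k3 ∈ ℤ with (k1+k2)(k2+k3)(k3+k1) ≠ 0, and suppose min(|k1|,|k2|,|k3|) ≤ M/2, where M = max(|k1|,|k2|,|k3|). Then each of the three pairwise products |(k1+k2)(k2+k3)|, |(k2+k3)(k3+k1)|, |(k1+k2)(k3+k1)| is at least M/8. -/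
/-!
A product of two nonzero integers is at least as large in absolute value as either factor. So if
`|(a + b)(b + c)| < M / 8`, then both `|a + b|` and `|b + c|` are below `M / 8`, which forces `|a|`,
`|b|`, `|c|` to lie within `M / 4` of each other. Since one of them is at least `M`, all exceed
`3M / 4`, contradicting that one of them is at most `M / 2`. This is `le_abs_mul_of_abs_le`; the
three bounds are its instances with `b` the index shared by the two factors.
-/

open MeasureTheory Complex
open scoped FourierTransform Classical BigOperators

/-- The extremality hypotheses are disjunctions, so that the lemma applies to any permutation
of the three integers. -/
theorem le_abs_mul_of_abs_le (a b c : ℤ) (M : ℝ) (hab : a + b ≠ 0) (hbc : b + c ≠ 0)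
    (hmax : M ≤ |(a:ℝ)| ∨ M ≤ |(b:ℝ)| ∨ M ≤ |(c:ℝ)|)
    (hmin : |(a:ℝ)| ≤ M / 2 ∨ |(b:ℝ)| ≤ M / 2 ∨ |(c:ℝ)| ≤ M / 2) :
    M / 8 ≤ |(((a + b) * (b + c) : ℤ) : ℝ)| := by
  have h1 : (1:ℝ) ≤ |(a:ℝ) + b| := by exact_mod_cast Int.one_le_abs hab
  have h2 : (1:ℝ) ≤ |(b:ℝ) + c| := by exact_mod_cast Int.one_le_abs hbc
  push_cast
  rw [abs_mul]
  by_contra! hlt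
  have h3 : |(a:ℝ) + b| < M / 8 := (le_mul_of_one_le_right (abs_nonneg _) h2).trans_lt hlt
  have h4 : |(b:ℝ) + c| < M / 8 := (le_mul_of_one_le_left (abs_nonneg _) h1).trans_lt hlt
  have h5 : |(|(a:ℝ)| - |(b:ℝ)|)| ≤ |(a:ℝ) + b| := by
    simpa using abs_abs_sub_abs_le (a:ℝ) (-b)
  have h6 : |(|(b:ℝ)| - |(c:ℝ)|)| ≤ |(b:ℝ) + c| := by
    simpa using abs_abs_sub_abs_le (b:ℝ) (-c)
  rw [abs_le] at h5 h6
  rcases hmax with h | h | h <;> rcases hmin with h' | h' | h' <;> linarith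

/-- if `(k1+k2)(k2+k3)(k3+k1) ≠ 0` and `min(|k1|,|k2|,|k3|) ≤ M/2`,
`M = max(|k1|,|k2|,|k3|)`, then each pairwise product of the sums is at least `M/8`. -/
theorem stmt11 (k1 k2 k3 : ℤ) (h : (k1 + k2) * (k2 + k3) * (k3 + k1) ≠ 0)
    (hmin : min (min |(k1:ℝ)| |(k2:ℝ)|) |(k3:ℝ)| ≤ kmax k1 k2 k3 / 2) :
    kmax k1 k2 k3 / 8 ≤ |(((k1+k2) * (k2+k3) : ℤ) : ℝ)| ∧
    kmax k1 k2 k3 / 8 ≤ |(((k2+k3) * (k3+k1) : ℤ) : ℝ)| ∧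
    kmax k1 k2 k3 / 8 ≤ |(((k1+k2) * (k3+k1) : ℤ) : ℝ)| := by
  have h12 : k1 + k2 ≠ 0 := by rintro h0; simp [h0] at h
  have h23 : k2 + k3 ≠ 0 := by rintro h0; simp [h0] at h
  have h31 : k3 + k1 ≠ 0 := by rintro h0; simp [h0] at h
  have hmax : kmax k1 k2 k3 ≤ |(k1:ℝ)| ∨ kmax k1 k2 k3 ≤ |(k2:ℝ)| ∨ kmax k1 k2 k3 ≤ |(k3:ℝ)| := by
    have := le_refl (kmax k1 k2 k3)
    nth_rewrite 2 [kmax] at this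
    simpa only [le_max_iff, or_assoc] using this
  simp only [min_le_iff, or_assoc] at hmin
  generalize kmax k1 k2 k3 = M at *
  refine ⟨le_abs_mul_of_abs_le k1 k2 k3 M h12 h23 hmax hmin,
    le_abs_mul_of_abs_le k2 k3 k1 M h23 h31 (by tauto) (by tauto), ?_⟩
  rw [mul_comm]
  exact le_abs_mul_of_abs_le k3 k1 k2 M h31 h12 (by tauto) (by tauto)
end
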